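/- arXiv:2306.07018 — 6 statements merged into one kernel-verified Lean document; each statement's English description precedes it below -/
import Mathlib

section
/- Under the IV assumptions (Independence, Relevance, Monotonicity, Exclusion), the first stage for D2 satisfies ΔE[D2|Z] = μ({C1,C2}) + μ({N1,C2}) + μ({A1,C2}). (Lemma 1.2) -/
open MeasureTheory ProbabilityTheory

noncomputable section

variable {Ω : Type*} [MeasurableSpace Ω]

/-- Observed first-part treatment: `D1 = D1(1)·Z + D1(0)·(1−Z)`. -/
def obsD1 (Z : Ω → ℝ) (D1 : Bool → Ω → ℝ) (ω : Ω) : ℝ :=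
  D1 true ω * Z ω + D1 false ω * (1 - Z ω)

/-- Observed second-part treatment. -/
def obsD2 (Z : Ω → ℝ) (D1 : Bool → Ω → ℝ) (D2 : Bool → Bool → Ω → ℝ) (ω : Ω) : ℝ :=
  (D2 true true ω * obsD1 Z D1 ω + D2 true false ω * (1 - obsD1 Z D1 ω)) * Z ω +
  (D2 false true ω * obsD1 Z D1 ω + D2 false false ω * (1 - obsD1 Z D1 ω)) * (1 - Z ω)

/-- Summary treatment `D∧ = D1·D2`. -/
def obsDand (Z : Ω → ℝ) (D1 : Bool → Ω → ℝ) (D2 : Bool → Bool → Ω → ℝ) (ω : Ω) : ℝ :=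
  obsD1 Z D1 ω * obsD2 Z D1 D2 ω

/-- Summary treatment `D∨ = D1 + D2 − D1·D2`. -/
def obsDor (Z : Ω → ℝ) (D1 : Bool → Ω → ℝ) (D2 : Bool → Bool → Ω → ℝ) (ω : Ω) : ℝ :=
  obsD1 Z D1 ω + obsD2 Z D1 D2 ω - obsD1 Z D1 ω * obsD2 Z D1 D2 ω

/-- Observed outcome `Y = Σ_{d1,d2} Y(Z,d1,d2)·1{D1=d1, D2=d2}`, written out using that the
observed treatments and the instrument are {0,1}-valued. The first index of `Yp` is `z`, the
second is `d1`, the third is `d2`. -/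
def obsY (Z : Ω → ℝ) (D1 : Bool → Ω → ℝ) (D2 : Bool → Bool → Ω → ℝ)
    (Yp : Bool → Bool → Bool → Ω → ℝ) (ω : Ω) : ℝ :=
  (Yp true true true ω * obsD1 Z D1 ω * obsD2 Z D1 D2 ω +
   Yp true false true ω * (1 - obsD1 Z D1 ω) * obsD2 Z D1 D2 ω +
   Yp true true false ω * obsD1 Z D1 ω * (1 - obsD2 Z D1 D2 ω) +
   Yp true false false ω * (1 - obsD1 Z D1 ω) * (1 - obsD2 Z D1 D2 ω)) * Z ω +
  (Yp false true true ω * obsD1 Z D1 ω * obsD2 Z D1 D2 ω +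
   Yp false false true ω * (1 - obsD1 Z D1 ω) * obsD2 Z D1 D2 ω +
   Yp false true false ω * obsD1 Z D1 ω * (1 - obsD2 Z D1 D2 ω) +
   Yp false false false ω * (1 - obsD1 Z D1 ω) * (1 - obsD2 Z D1 D2 ω)) * (1 - Z ω)

/-- `ΔE[A|Z] := E[A | Z = 1] − E[A | Z = 0]`, expectations under conditional measures. -/
def dE (μ : Measure Ω) (Z A : Ω → ℝ) : ℝ :=
  (∫ ω, A ω ∂(μ[|Z ⁻¹' {1}])) - (∫ ω, A ω ∂(μ[|Z ⁻¹' {0}]))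

/-- The full-complier event `{C1,C2}`. -/
def CCev (D1 : Bool → Ω → ℝ) (D2 : Bool → Bool → Ω → ℝ) : Set Ω :=
  {ω | D1 true ω - D1 false ω = 1 ∧ D2 true true ω - D2 false false ω = 1}

/-- The mover event `{C1,N2}`. -/
def CNev (D1 : Bool → Ω → ℝ) (D2 : Bool → Bool → Ω → ℝ) : Set Ω :=
  {ω | D1 true ω - D1 false ω = 1 ∧ D2 true true ω = 0 ∧ D2 false false ω = 0}

/-- The mover event `{C1,A2}`. -/
def CAev (D1 : Bool → Ω → ℝ) (D2 : Bool → Bool → Ω → ℝ) : Set Ω :=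
  {ω | D1 true ω - D1 false ω = 1 ∧ D2 true true ω = 1 ∧ D2 false false ω = 1}

/-- The mover event `{N1,C2}`. -/
def NCev (D1 : Bool → Ω → ℝ) (D2 : Bool → Bool → Ω → ℝ) : Set Ω :=
  {ω | D1 true ω = 0 ∧ D1 false ω = 0 ∧ D2 true false ω - D2 false false ω = 1}

/-- The mover event `{A1,C2}`. -/
def ACev (D1 : Bool → Ω → ℝ) (D2 : Bool → Bool → Ω → ℝ) : Set Ω :=
  {ω | D1 true ω = 1 ∧ D1 false ω = 1 ∧ D2 true true ω - D2 false true ω = 1}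

theorem aux_int_cond {Ωa : Type*} [MeasurableSpace Ωa] (μ : Measure Ωa) [IsProbabilityMeasure μ]
    (Z W : Ωa → ℝ) (hZ : Measurable Z) (hW : Measurable W) (hi : IndepFun W Z μ) (c : ℝ)
    (hc : μ (Z ⁻¹' {c}) ≠ 0) :
    ∫ ω, W ω ∂(μ[|Z ⁻¹' {c}]) = ∫ ω, W ω ∂μ := by
  have hs : MeasurableSet (Z ⁻¹' {c}) := hZ (measurableSet_singleton c)
  have hg : Measurable (Set.indicator ({c} : Set ℝ) (fun _ => (1 : ℝ))) :=
    measurable_const.indicator (measurableSet_singleton c)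
  have h2 := (hi.comp (φ := id) measurable_id hg).integral_fun_mul_eq_mul_integral
    hW.aestronglyMeasurable (hg.comp hZ).aestronglyMeasurable
  have h3 : ∫ ω, (Set.indicator ({c} : Set ℝ) (fun _ => (1 : ℝ)) ∘ Z) ω ∂μ
      = (μ (Z ⁻¹' {c})).toReal := by
    have : (Set.indicator ({c} : Set ℝ) (fun _ => (1 : ℝ)) ∘ Z)
        = Set.indicator (Z ⁻¹' {c}) (fun _ => (1 : ℝ)) := by
      ext ω
      simp only [Function.comp, Set.indicator, Set.mem_preimage]
    rw [this, integral_indicator hs]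
    simp [Measure.real]
  have h4 : ∫ ω, (id ∘ W) ω * (Set.indicator ({c} : Set ℝ) (fun _ => (1 : ℝ)) ∘ Z) ω ∂μ
      = ∫ ω in Z ⁻¹' {c}, W ω ∂μ := by
    rw [← integral_indicator hs]
    congr 1
    ext ω
    by_cases h : Z ω = c <;> simp [Set.indicator, h]
  rw [h3, h4] at h2
  rw [ProbabilityTheory.cond, integral_smul_measure, h2]
  have : (μ (Z ⁻¹' {c})).toReal ≠ 0 := ENNReal.toReal_ne_zero.2 ⟨hc, measure_ne_top _ _⟩
  simp only [ENNReal.toReal_inv, smul_eq_mul, Function.comp, id]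
  field_simp

theorem stmt_1
    (μ : Measure Ω) [IsProbabilityMeasure μ]
    (Z : Ω → ℝ) (D1 : Bool → Ω → ℝ) (D2 : Bool → Bool → Ω → ℝ)
    (Yp : Bool → Bool → Bool → Ω → ℝ)
    (hZmeas : Measurable Z)
    (hD1meas : ∀ b, Measurable (D1 b))
    (hD2meas : ∀ b b', Measurable (D2 b b'))
    (hYmeas : ∀ z d1 d2, Measurable (Yp z d1 d2))
    (hYint : ∀ z d1 d2, Integrable (Yp z d1 d2) μ)
    (hZ01 : ∀ ω, Z ω = 0 ∨ Z ω = 1)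
    (hZpos : 0 < μ (Z ⁻¹' {1})) (hZlt : μ (Z ⁻¹' {1}) < 1)
    (hD101 : ∀ b ω, D1 b ω = 0 ∨ D1 b ω = 1)
    (hD201 : ∀ b b' ω, D2 b b' ω = 0 ∨ D2 b b' ω = 1)
    (hindep : IndepFun
      (fun ω => ((fun b => D1 b ω), (fun b b' => D2 b b' ω), (fun z d1 d2 => Yp z d1 d2 ω))) Z μ)
    (hrel1 : 0 < dE μ Z (obsD1 Z D1))
    (hrel2 : 0 < dE μ Z (obsD2 Z D1 D2))
    (hrelAnd : 0 < dE μ Z (obsDand Z D1 D2))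
    (hrelOr : 0 < dE μ Z (obsDor Z D1 D2))
    (hmono1 : ∀ᵐ ω ∂μ, D1 false ω ≤ D1 true ω)
    (hmono2 : ∀ᵐ ω ∂μ,
      D2 false true ω * D1 false ω + D2 false false ω * (1 - D1 false ω) ≤
        D2 true true ω * D1 true ω + D2 true false ω * (1 - D1 true ω))
    (hexcl : ∀ d1 d2, ∀ᵐ ω ∂μ, Yp true d1 d2 ω = Yp false d1 d2 ω) :
    dE μ Z (obsD2 Z D1 D2) =
      (μ (CCev D1 D2)).toReal + (μ (NCev D1 D2)).toReal + (μ (ACev D1 D2)).toReal := by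
  set V1 : Ω → ℝ := fun ω => D2 true true ω * D1 true ω + D2 true false ω * (1 - D1 true ω)
    with hV1
  set V0 : Ω → ℝ := fun ω => D2 false true ω * D1 false ω + D2 false false ω * (1 - D1 false ω)
    with hV0
  have mV1 : Measurable V1 := by fun_prop
  have mV0 : Measurable V0 := by fun_prop
  have i1 : IndepFun V1 Z μ := hindep.comp
    (φ := fun p : (Bool → ℝ) × (Bool → Bool → ℝ) × (Bool → Bool → Bool → ℝ) =>
      p.2.1 true true * p.1 true + p.2.1 true false * (1 - p.1 true))
    (ψ := id) (by fun_prop) measurable_id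
  have i0 : IndepFun V0 Z μ := hindep.comp
    (φ := fun p : (Bool → ℝ) × (Bool → Bool → ℝ) × (Bool → Bool → Bool → ℝ) =>
      p.2.1 false true * p.1 false + p.2.1 false false * (1 - p.1 false))
    (ψ := id) (by fun_prop) measurable_id
  have s1 : MeasurableSet (Z ⁻¹' {1}) := hZmeas (measurableSet_singleton 1)
  have s0 : MeasurableSet (Z ⁻¹' {0}) := hZmeas (measurableSet_singleton 0)
  have hz0 : μ (Z ⁻¹' {0}) ≠ 0 := by
    intro h
    have hc : (Z ⁻¹' {1})ᶜ = Z ⁻¹' {0} := by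
      ext ω
      rcases hZ01 ω with h | h <;> simp [h]
    rw [← hc, prob_compl_eq_zero_iff s1] at h
    exact hZlt.ne h
  have e1 : ∫ ω, obsD2 Z D1 D2 ω ∂(μ[|Z ⁻¹' {1}]) = ∫ ω, V1 ω ∂μ := by
    rw [← aux_int_cond μ Z V1 hZmeas mV1 i1 1 hZpos.ne']
    apply integral_congr_ae
    filter_upwards [ae_cond_mem s1] with ω h
    have h : Z ω = 1 := h
    simp [obsD2, obsD1, h, hV1]
  have e0 : ∫ ω, obsD2 Z D1 D2 ω ∂(μ[|Z ⁻¹' {0}]) = ∫ ω, V0 ω ∂μ := by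
    rw [← aux_int_cond μ Z V0 hZmeas mV0 i0 0 hz0]
    apply integral_congr_ae
    filter_upwards [ae_cond_mem s0] with ω h
    have h : Z ω = 0 := h
    simp [obsD2, obsD1, h, hV0]
  have b1 : Integrable V1 μ := by
    refine Integrable.of_bound mV1.aestronglyMeasurable 1 (Filter.Eventually.of_forall fun ω => ?_)
    rcases hD101 true ω with h | h <;> rcases hD201 true true ω with hp | hp <;>
      rcases hD201 true false ω with hq | hq <;> simp [hV1, h, hp, hq]
  have b0 : Integrable V0 μ := by
    refine Integrable.of_bound mV0.aestronglyMeasurable 1 (Filter.Eventually.of_forall fun ω => ?_)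
    rcases hD101 false ω with h | h <;> rcases hD201 false true ω with hp | hp <;>
      rcases hD201 false false ω with hq | hq <;> simp [hV0, h, hp, hq]
  have mC : MeasurableSet (CCev D1 D2) :=
    (measurableSet_eq_fun (by fun_prop) measurable_const).inter
      (measurableSet_eq_fun (by fun_prop) measurable_const)
  have mN : MeasurableSet (NCev D1 D2) :=
    (measurableSet_eq_fun (by fun_prop) measurable_const).inter
      ((measurableSet_eq_fun (by fun_prop) measurable_const).inter
        (measurableSet_eq_fun (by fun_prop) measurable_const))
  have mA : MeasurableSet (ACev D1 D2) :=
    (measurableSet_eq_fun (by fun_prop) measurable_const).inter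
      ((measurableSet_eq_fun (by fun_prop) measurable_const).inter
        (measurableSet_eq_fun (by fun_prop) measurable_const))
  have key : ∀ S : Set Ω, MeasurableSet S →
      Integrable (S.indicator (fun _ => (1 : ℝ))) μ ∧
      ∫ ω, S.indicator (fun _ => (1 : ℝ)) ω ∂μ = (μ S).toReal := by
    intro S hS
    refine ⟨(integrable_const _).indicator hS, ?_⟩
    rw [integral_indicator hS]
    simp [Measure.real]
  obtain ⟨jC, kC⟩ := key _ mC
  obtain ⟨jN, kN⟩ := key _ mN
  obtain ⟨jA, kA⟩ := key _ mA
  rw [dE, e1, e0, ← kC, ← kN, ← kA, ← integral_sub b1 b0, ← integral_add jC jN]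
  refine Eq.trans ?_ (integral_add (jC.add jN) jA)
  apply integral_congr_ae
  filter_upwards [hmono1, hmono2] with ω h1 h2
  simp only [hV1, hV0, Set.indicator, CCev, NCev, ACev, Set.mem_ofPred_eq]
  rcases hD101 true ω with a | a <;> rcases hD101 false ω with b | b <;>
  rcases hD201 true true ω with c | c <;> rcases hD201 true false ω with d | d <;>
  rcases hD201 false true ω with e | e <;> rcases hD201 false false ω with f | f <;>
  rw [a, b] at h1 <;> rw [a, b, c, d, e, f] at h2 <;> simp only [a, b, c, d, e, f] <;>
  first
  | (norm_num; done)
  | (exfalso; norm_num at h1; done)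
  | (exfalso; norm_num at h2; done)
end
end

section
/- Under the IV assumptions (Independence, Relevance, Monotonicity, Exclusion), the first stage for D∧ satisfies ΔE[D∧|Z] = μ({C1,C2}) + μ({C1,A2}) + μ({A1,C2}). (Lemma 1.3) -/
open MeasureTheory ProbabilityTheory

noncomputable section

variable {Ω : Type*} [MeasurableSpace Ω]

/-- Conditioning on the instrument does not change the mean of an independent variable. -/
theorem integral_cond_of_indep (μ : Measure Ω) [IsProbabilityMeasure μ]
    (Z A B : Ω → ℝ) (c : ℝ) (hZ : Measurable Z) (hB : Measurable B)
    (hind : IndepFun B Z μ) (hc : μ (Z ⁻¹' {c}) ≠ 0)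
    (hAB : ∀ ω, Z ω = c → A ω = B ω) :
    ∫ ω, A ω ∂(μ[|Z ⁻¹' {c}]) = ∫ ω, B ω ∂μ := by
  have hs : MeasurableSet (Z ⁻¹' {c}) := hZ (measurableSet_singleton c)
  have hphi : Measurable (fun x : ℝ => Set.indicator {c} (fun _ => (1 : ℝ)) x) :=
    measurable_const.indicator (measurableSet_singleton c)
  have hi : IndepFun B (fun ω => Set.indicator {c} (fun _ => (1 : ℝ)) (Z ω)) μ :=
    hind.comp measurable_id hphi
  have hmul := hi.integral_fun_mul_eq_mul_integral hB.aestronglyMeasurable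
    (hphi.comp hZ).aestronglyMeasurable
  have h1 : ∫ ω, Set.indicator {c} (fun _ => (1 : ℝ)) (Z ω) ∂μ = (μ (Z ⁻¹' {c})).toReal := by
    have : (fun ω => Set.indicator {c} (fun _ => (1 : ℝ)) (Z ω))
        = (Z ⁻¹' {c}).indicator (fun _ => (1 : ℝ)) := by
      ext ω; simp [Set.indicator]
    rw [this, integral_indicator hs]
    simp [Measure.real]
  have h2 : ∫ ω, B ω * Set.indicator {c} (fun _ => (1 : ℝ)) (Z ω) ∂μ
      = ∫ ω in Z ⁻¹' {c}, A ω ∂μ := by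
    rw [← integral_indicator hs]
    congr 1
    ext ω
    by_cases h : Z ω = c
    · simp [Set.indicator, h, hAB ω h]
    · simp [Set.indicator, h]
  rw [h1, h2] at hmul
  have hr : (μ (Z ⁻¹' {c})).toReal ≠ 0 := ENNReal.toReal_ne_zero.2 ⟨hc, measure_ne_top _ _⟩
  rw [ProbabilityTheory.cond, integral_smul_measure, hmul, ENNReal.toReal_inv, smul_eq_mul]
  field_simp

theorem stmt_2
    (μ : Measure Ω) [IsProbabilityMeasure μ]
    (Z : Ω → ℝ) (D1 : Bool → Ω → ℝ) (D2 : Bool → Bool → Ω → ℝ)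
    (Yp : Bool → Bool → Bool → Ω → ℝ)
    (hZmeas : Measurable Z)
    (hD1meas : ∀ b, Measurable (D1 b))
    (hD2meas : ∀ b b', Measurable (D2 b b'))
    (hYmeas : ∀ z d1 d2, Measurable (Yp z d1 d2))
    (hYint : ∀ z d1 d2, Integrable (Yp z d1 d2) μ)
    (hZ01 : ∀ ω, Z ω = 0 ∨ Z ω = 1)
    (hZpos : 0 < μ (Z ⁻¹' {1})) (hZlt : μ (Z ⁻¹' {1}) < 1)
    (hD101 : ∀ b ω, D1 b ω = 0 ∨ D1 b ω = 1)
    (hD201 : ∀ b b' ω, D2 b b' ω = 0 ∨ D2 b b' ω = 1)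
    (hindep : IndepFun
      (fun ω => ((fun b => D1 b ω), (fun b b' => D2 b b' ω), (fun z d1 d2 => Yp z d1 d2 ω))) Z μ)
    (hrel1 : 0 < dE μ Z (obsD1 Z D1))
    (hrel2 : 0 < dE μ Z (obsD2 Z D1 D2))
    (hrelAnd : 0 < dE μ Z (obsDand Z D1 D2))
    (hrelOr : 0 < dE μ Z (obsDor Z D1 D2))
    (hmono1 : ∀ᵐ ω ∂μ, D1 false ω ≤ D1 true ω)
    (hmono2 : ∀ᵐ ω ∂μ,
      D2 false true ω * D1 false ω + D2 false false ω * (1 - D1 false ω) ≤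
        D2 true true ω * D1 true ω + D2 true false ω * (1 - D1 true ω))
    (hexcl : ∀ d1 d2, ∀ᵐ ω ∂μ, Yp true d1 d2 ω = Yp false d1 d2 ω) :
    dE μ Z (obsDand Z D1 D2) =
      (μ (CCev D1 D2)).toReal + (μ (CAev D1 D2)).toReal + (μ (ACev D1 D2)).toReal := by
  have hZ0 : μ (Z ⁻¹' {0}) ≠ 0 := by
    intro h0
    have hcompl : Z ⁻¹' {0} = (Z ⁻¹' {1})ᶜ := by
      ext ω
      rcases hZ01 ω with h | h <;> simp [h]
    rw [hcompl, prob_compl_eq_zero_iff (hZmeas (measurableSet_singleton 1))] at h0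
    exact hZlt.ne h0
  have e1 : ∫ ω, obsDand Z D1 D2 ω ∂(μ[|Z ⁻¹' {1}]) = ∫ ω, D1 true ω * D2 true true ω ∂μ := by
    refine integral_cond_of_indep μ Z _ _ 1 hZmeas ((hD1meas _).mul (hD2meas _ _)) ?_ hZpos.ne' ?_
    · exact hindep.comp
        (φ := fun p : (Bool → ℝ) × (Bool → Bool → ℝ) × (Bool → Bool → Bool → ℝ) =>
          p.1 true * p.2.1 true true) (by fun_prop) measurable_id
    · intro ω h
      rcases hD101 true ω with h1 | h1 <;> simp [obsDand, obsD1, obsD2, h, h1]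
  have e0 : ∫ ω, obsDand Z D1 D2 ω ∂(μ[|Z ⁻¹' {0}]) = ∫ ω, D1 false ω * D2 false true ω ∂μ := by
    refine integral_cond_of_indep μ Z _ _ 0 hZmeas ((hD1meas _).mul (hD2meas _ _)) ?_ hZ0 ?_
    · exact hindep.comp
        (φ := fun p : (Bool → ℝ) × (Bool → Bool → ℝ) × (Bool → Bool → Bool → ℝ) =>
          p.1 false * p.2.1 false true) (by fun_prop) measurable_id
    · intro ω h
      rcases hD101 false ω with h1 | h1 <;> simp [obsDand, obsD1, obsD2, h, h1]
  have hint : ∀ z, Integrable (fun ω => D1 z ω * D2 z true ω) μ := by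
    intro z
    refine Integrable.of_bound ((hD1meas z).mul (hD2meas z true)).aestronglyMeasurable 1 ?_
    refine Filter.Eventually.of_forall fun ω => ?_
    rcases hD101 z ω with h1 | h1 <;> rcases hD201 z true ω with h2 | h2 <;> simp [h1, h2]
  have mCC : MeasurableSet (CCev D1 D2) :=
    (measurableSet_eq_fun ((hD1meas true).sub (hD1meas false)) measurable_const).inter
      (measurableSet_eq_fun ((hD2meas true true).sub (hD2meas false false)) measurable_const)
  have mCA : MeasurableSet (CAev D1 D2) :=
    (measurableSet_eq_fun ((hD1meas true).sub (hD1meas false)) measurable_const).inter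
      ((measurableSet_eq_fun (hD2meas true true) measurable_const).inter
        (measurableSet_eq_fun (hD2meas false false) measurable_const))
  have mAC : MeasurableSet (ACev D1 D2) :=
    (measurableSet_eq_fun (hD1meas true) measurable_const).inter
      ((measurableSet_eq_fun (hD1meas false) measurable_const).inter
        (measurableSet_eq_fun ((hD2meas true true).sub (hD2meas false true)) measurable_const))
  have hmeas : ∀ S : Set Ω, MeasurableSet S →
      (μ S).toReal = ∫ ω, S.indicator (fun _ => (1 : ℝ)) ω ∂μ := by
    intro S hS
    rw [integral_indicator hS]
    simp [Measure.real]
  have hiS : ∀ S : Set Ω, MeasurableSet S →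
      Integrable (fun ω => S.indicator (fun _ => (1 : ℝ)) ω) μ := fun S hS =>
    (integrable_const (1 : ℝ)).indicator hS
  have hsum : Integrable (fun ω => (CCev D1 D2).indicator (fun _ => (1 : ℝ)) ω +
      (CAev D1 D2).indicator (fun _ => (1 : ℝ)) ω) μ := (hiS _ mCC).add (hiS _ mCA)
  rw [dE, e1, e0, ← integral_sub (hint true) (hint false), hmeas _ mCC, hmeas _ mCA, hmeas _ mAC,
    ← integral_add (hiS _ mCC) (hiS _ mCA),
    ← integral_add hsum (hiS _ mAC)]
  refine integral_congr_ae ?_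
  filter_upwards [hmono1, hmono2] with ω m1 m2
  simp only [Set.indicator, CCev, CAev, ACev, Set.mem_ofPred_eq]
  rcases hD101 true ω with a | a <;> rcases hD101 false ω with b | b <;>
    rw [a, b] at m1 m2 <;>
    rcases hD201 true true ω with c | c <;> rcases hD201 false true ω with d | d <;>
    rcases hD201 false false ω with e | e <;>
    rw [d, e] at m2 <;> first | (exfalso; linarith) | (norm_num [a, b, c, d, e]; done)
end
end

section
/- Under the IV assumptions (Independence, Relevance, Monotonicity, Exclusion), the first stage for D∨ satisfies ΔE[D∨|Z] = μ({C1,C2}) + μ({C1,N2}) + μ({N1,C2}). (Lemma 1.4) -/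
open MeasureTheory ProbabilityTheory

noncomputable section

variable {Ω : Type*} [MeasurableSpace Ω]

/-- Potential summary treatment `D∨(z)` as a function of the potential treatments. -/
def potOr (z : Bool) (p : (Bool → ℝ) × (Bool → Bool → ℝ)) : ℝ :=
  p.1 z + (p.2 z true * p.1 z + p.2 z false * (1 - p.1 z)) -
    p.1 z * (p.2 z true * p.1 z + p.2 z false * (1 - p.1 z))

theorem aux_cond (μ : Measure Ω) [IsProbabilityMeasure μ] (Z W A : Ω → ℝ) (c : ℝ)
    (hZ : Measurable Z) (hW : Measurable W) (hi : IndepFun W Z μ) (hc : μ (Z ⁻¹' {c}) ≠ 0)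
    (hA : ∀ ω, Z ω = c → A ω = W ω) :
    ∫ ω, A ω ∂(μ[|Z ⁻¹' {c}]) = ∫ ω, W ω ∂μ := by
  have hs : MeasurableSet (Z ⁻¹' {c}) := hZ (measurableSet_singleton c)
  have h1 : ∫ ω, A ω ∂(μ[|Z ⁻¹' {c}]) = ∫ ω, W ω ∂(μ[|Z ⁻¹' {c}]) := by
    apply integral_congr_ae
    filter_upwards [ae_cond_mem hs] with ω hω
    exact hA ω hω
  have h2 : (μ[|Z ⁻¹' {c}]).map W = μ.map W := by
    ext t ht
    rw [Measure.map_apply hW ht, Measure.map_apply hW ht, cond_apply hs, Set.inter_comm,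
      hi.measure_inter_preimage_eq_mul _ _ ht (measurableSet_singleton c),
      mul_comm (μ (W ⁻¹' t)), ← mul_assoc,
      ENNReal.inv_mul_cancel hc (measure_ne_top _ _), one_mul]
  rw [h1]
  have h3 : ∀ ν : Measure Ω, ∫ ω, W ω ∂ν = ∫ x, x ∂(ν.map W) := fun ν =>
    (integral_map hW.aemeasurable measurable_id.aestronglyMeasurable).symm
  rw [h3, h3, h2]

theorem stmt_3
    (μ : Measure Ω) [IsProbabilityMeasure μ]
    (Z : Ω → ℝ) (D1 : Bool → Ω → ℝ) (D2 : Bool → Bool → Ω → ℝ)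
    (Yp : Bool → Bool → Bool → Ω → ℝ)
    (hZmeas : Measurable Z)
    (hD1meas : ∀ b, Measurable (D1 b))
    (hD2meas : ∀ b b', Measurable (D2 b b'))
    (hYmeas : ∀ z d1 d2, Measurable (Yp z d1 d2))
    (hYint : ∀ z d1 d2, Integrable (Yp z d1 d2) μ)
    (hZ01 : ∀ ω, Z ω = 0 ∨ Z ω = 1)
    (hZpos : 0 < μ (Z ⁻¹' {1})) (hZlt : μ (Z ⁻¹' {1}) < 1)
    (hD101 : ∀ b ω, D1 b ω = 0 ∨ D1 b ω = 1)
    (hD201 : ∀ b b' ω, D2 b b' ω = 0 ∨ D2 b b' ω = 1)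
    (hindep : IndepFun
      (fun ω => ((fun b => D1 b ω), (fun b b' => D2 b b' ω), (fun z d1 d2 => Yp z d1 d2 ω))) Z μ)
    (hrel1 : 0 < dE μ Z (obsD1 Z D1))
    (hrel2 : 0 < dE μ Z (obsD2 Z D1 D2))
    (hrelAnd : 0 < dE μ Z (obsDand Z D1 D2))
    (hrelOr : 0 < dE μ Z (obsDor Z D1 D2))
    (hmono1 : ∀ᵐ ω ∂μ, D1 false ω ≤ D1 true ω)
    (hmono2 : ∀ᵐ ω ∂μ,
      D2 false true ω * D1 false ω + D2 false false ω * (1 - D1 false ω) ≤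
        D2 true true ω * D1 true ω + D2 true false ω * (1 - D1 true ω))
    (hexcl : ∀ d1 d2, ∀ᵐ ω ∂μ, Yp true d1 d2 ω = Yp false d1 d2 ω) :
    dE μ Z (obsDor Z D1 D2) =
      (μ (CCev D1 D2)).toReal + (μ (CNev D1 D2)).toReal + (μ (NCev D1 D2)).toReal := by
  have hW : ∀ z : Bool, Measurable (fun ω => potOr z (fun b => D1 b ω, fun b b' => D2 b b' ω)) ∧
      IndepFun (fun ω => potOr z (fun b => D1 b ω, fun b b' => D2 b b' ω)) Z μ := by
    intro z
    have hm : Measurable (potOr z) := by unfold potOr; fun_prop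
    refine ⟨by unfold potOr; fun_prop, ?_⟩
    exact hindep.comp (φ := fun p => potOr z (p.1, p.2.1)) (ψ := id) (by unfold potOr; fun_prop)
      measurable_id
  have h0 : μ (Z ⁻¹' {0}) ≠ 0 := by
    intro h
    have : μ (Z ⁻¹' {1}) = 1 := by
      rw [prob_compl_eq_zero_iff (hZmeas (measurableSet_singleton 1)) |>.symm]
      refine measure_mono_null ?_ h
      intro ω hω
      rcases hZ01 ω with h | h
      · exact h
      · exact absurd h hω
    exact hZlt.ne this
  unfold dE
  rw [aux_cond μ Z _ _ 1 hZmeas (hW true).1 (hW true).2 hZpos.ne' ?_,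
    aux_cond μ Z _ _ 0 hZmeas (hW false).1 (hW false).2 h0 ?_]
  rotate_left
  · intro ω h
    simp [obsDor, obsD1, obsD2, potOr, h]
  · intro ω h
    simp [obsDor, obsD1, obsD2, potOr, h]
  have hb : ∀ z ω, ‖potOr z (fun b => D1 b ω, fun b b' => D2 b b' ω)‖ ≤ 1 := by
    intro z ω
    rcases hD101 z ω with h1 | h1 <;> rcases hD201 z true ω with h2 | h2 <;>
      rcases hD201 z false ω with h3 | h3 <;> simp [potOr, h1, h2, h3]
  have hint : ∀ z, Integrable (fun ω => potOr z (fun b => D1 b ω, fun b b' => D2 b b' ω)) μ :=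
    fun z => Integrable.of_bound (hW z).1.aestronglyMeasurable 1 (ae_of_all _ (hb z))
  have hD1t := hD1meas true
  have hD1f := hD1meas false
  have m1 : MeasurableSet (CCev D1 D2) := by
    refine MeasurableSet.inter ?_ ?_ <;>
      exact measurableSet_eq_fun (by fun_prop) (by fun_prop)
  have m2 : MeasurableSet (CNev D1 D2) := by
    refine MeasurableSet.inter ?_ (MeasurableSet.inter ?_ ?_) <;>
      exact measurableSet_eq_fun (by fun_prop) (by fun_prop)
  have m3 : MeasurableSet (NCev D1 D2) := by
    refine MeasurableSet.inter ?_ (MeasurableSet.inter ?_ ?_) <;>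
      exact measurableSet_eq_fun (by fun_prop) (by fun_prop)
  have hI : ∀ s : Set Ω, MeasurableSet s →
      Integrable (s.indicator (1 : Ω → ℝ)) μ ∧ (μ s).toReal = ∫ ω, s.indicator (1 : Ω → ℝ) ω ∂μ :=
    fun s hs => ⟨(integrable_const (1 : ℝ)).indicator hs, (integral_indicator_one hs).symm⟩
  rw [(hI _ m1).2, (hI _ m2).2, (hI _ m3).2, ← integral_sub (hint true) (hint false),
    ← integral_add (hI _ m1).1 (hI _ m2).1,
    ← integral_add (f := fun a => (CCev D1 D2).indicator (1 : Ω → ℝ) a +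
      (CNev D1 D2).indicator (1 : Ω → ℝ) a) ((hI _ m1).1.add (hI _ m2).1) (hI _ m3).1]
  apply integral_congr_ae
  filter_upwards [hmono1, hmono2] with ω a1 a2
  simp only [Set.indicator_apply, CCev, CNev, NCev, Set.mem_ofPred_eq, potOr, Pi.one_apply]
  rcases hD101 true ω with h1 | h1 <;> rcases hD101 false ω with h2 | h2 <;>
  rcases hD201 true true ω with h3 | h3 <;> rcases hD201 true false ω with h4 | h4 <;>
  rcases hD201 false true ω with h5 | h5 <;> rcases hD201 false false ω with h6 | h6 <;>
  simp only [h1, h2, h3, h4, h5, h6] at a1 a2 ⊢ <;>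
  first
  | (exfalso; linarith)
  | norm_num
end
end

section
/- Under the IV assumptions (Independence, Relevance, Monotonicity, Exclusion), the reduced form decomposes as ΔE[Y|Z] = E[Y(1,1)−Y(0,0); {C1,C2}] + E[Y(1,0)−Y(0,0); {C1,N2}] + E[Y(1,1)−Y(0,1); {C1,A2}] + E[Y(0,1)−Y(0,0); {N1,C2}] + E[Y(1,1)−Y(1,0); {A1,C2}]. (Lemma 1.5) -/
open MeasureTheory ProbabilityTheory

noncomputable section

variable {Ω : Type*} [MeasurableSpace Ω]

/-- Conditional expectation given an instrument value equals the unconditional one. -/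
lemma cond_integral_eq (μ : Measure Ω) [IsProbabilityMeasure μ] {β : Type*} [MeasurableSpace β]
    (X : Ω → β) (Z : Ω → ℝ) (hZ : Measurable Z) (hind : IndepFun X Z μ)
    (hX : Measurable X)
    (g : β → ℝ) (hg : Measurable g) (c : ℝ) (hc : μ (Z ⁻¹' {c}) ≠ 0) (A : Ω → ℝ)
    (hA : ∀ ω, Z ω = c → A ω = g (X ω)) :
    ∫ ω, A ω ∂(μ[|Z ⁻¹' {c}]) = ∫ ω, g (X ω) ∂μ := by
  have hms : MeasurableSet (Z ⁻¹' {c}) := hZ (measurableSet_singleton c)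
  have h1 : ∫ ω in Z ⁻¹' {c}, A ω ∂μ = ∫ ω in Z ⁻¹' {c}, g (X ω) ∂μ :=
    setIntegral_congr_fun hms (fun ω hω => hA ω hω)
  have hφ : Measurable (Set.indicator ({c} : Set ℝ) (fun _ => (1 : ℝ))) :=
    measurable_const.indicator (measurableSet_singleton c)
  have hi : IndepFun (g ∘ X) ((Set.indicator ({c} : Set ℝ) (fun _ => (1 : ℝ))) ∘ Z) μ :=
    hind.comp hg hφ
  have h2 := hi.integral_fun_mul_eq_mul_integral (hg.comp hX).aestronglyMeasurable
    (hφ.comp hZ).aestronglyMeasurable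
  have h3 : ∫ ω, ((Set.indicator ({c} : Set ℝ) (fun _ => (1 : ℝ))) ∘ Z) ω ∂μ
      = μ.real (Z ⁻¹' {c}) := by
    rw [← integral_indicator_one hms]
    rfl
  have h4 : ∫ ω in Z ⁻¹' {c}, g (X ω) ∂μ
      = (∫ ω, g (X ω) ∂μ) * μ.real (Z ⁻¹' {c}) := by
    rw [← h3, ← integral_indicator hms]
    refine Eq.trans (integral_congr_ae (Filter.Eventually.of_forall fun ω => ?_)) h2
    by_cases h : Z ω = c <;> simp [Set.indicator, h]
  have h5 : μ.real (Z ⁻¹' {c}) ≠ 0 := by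
    simp [Measure.real, ENNReal.toReal_eq_zero_iff, hc]
  rw [ProbabilityTheory.cond, integral_smul_measure, h1, h4, ENNReal.toReal_inv, smul_eq_mul]
  change (μ.real (Z ⁻¹' {c}))⁻¹ * _ = _
  field_simp

/-- Outcome under instrument value `z`, as a function of all potential variables. -/
def outG (z : Bool) (x : (Bool → ℝ) × (Bool → Bool → ℝ) × (Bool → Bool → Bool → ℝ)) : ℝ :=
  x.2.2 z true true * x.1 z * x.2.1 z true +
  x.2.2 z false true * (1 - x.1 z) * x.2.1 z false +
  x.2.2 z true false * x.1 z * (1 - x.2.1 z true) +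
  x.2.2 z false false * (1 - x.1 z) * (1 - x.2.1 z false)

lemma measurable_outG (z : Bool) : Measurable (outG z) := by
  unfold outG
  fun_prop

theorem stmt_4
    (μ : Measure Ω) [IsProbabilityMeasure μ]
    (Z : Ω → ℝ) (D1 : Bool → Ω → ℝ) (D2 : Bool → Bool → Ω → ℝ)
    (Yp : Bool → Bool → Bool → Ω → ℝ)
    (hZmeas : Measurable Z)
    (hD1meas : ∀ b, Measurable (D1 b))
    (hD2meas : ∀ b b', Measurable (D2 b b'))
    (hYmeas : ∀ z d1 d2, Measurable (Yp z d1 d2))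
    (hYint : ∀ z d1 d2, Integrable (Yp z d1 d2) μ)
    (hZ01 : ∀ ω, Z ω = 0 ∨ Z ω = 1)
    (hZpos : 0 < μ (Z ⁻¹' {1})) (hZlt : μ (Z ⁻¹' {1}) < 1)
    (hD101 : ∀ b ω, D1 b ω = 0 ∨ D1 b ω = 1)
    (hD201 : ∀ b b' ω, D2 b b' ω = 0 ∨ D2 b b' ω = 1)
    (hindep : IndepFun
      (fun ω => ((fun b => D1 b ω), (fun b b' => D2 b b' ω), (fun z d1 d2 => Yp z d1 d2 ω))) Z μ)
    (hrel1 : 0 < dE μ Z (obsD1 Z D1))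
    (hrel2 : 0 < dE μ Z (obsD2 Z D1 D2))
    (hrelAnd : 0 < dE μ Z (obsDand Z D1 D2))
    (hrelOr : 0 < dE μ Z (obsDor Z D1 D2))
    (hmono1 : ∀ᵐ ω ∂μ, D1 false ω ≤ D1 true ω)
    (hmono2 : ∀ᵐ ω ∂μ,
      D2 false true ω * D1 false ω + D2 false false ω * (1 - D1 false ω) ≤
        D2 true true ω * D1 true ω + D2 true false ω * (1 - D1 true ω))
    (hexcl : ∀ d1 d2, ∀ᵐ ω ∂μ, Yp true d1 d2 ω = Yp false d1 d2 ω) :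
    dE μ Z (obsY Z D1 D2 Yp) =
      (∫ ω in CCev D1 D2, (Yp true true true ω - Yp true false false ω) ∂μ) +
      (∫ ω in CNev D1 D2, (Yp true true false ω - Yp true false false ω) ∂μ) +
      (∫ ω in CAev D1 D2, (Yp true true true ω - Yp true false true ω) ∂μ) +
      (∫ ω in NCev D1 D2, (Yp true false true ω - Yp true false false ω) ∂μ) +
      (∫ ω in ACev D1 D2, (Yp true true true ω - Yp true true false ω) ∂μ) := by
  set X : Ω → (Bool → ℝ) × (Bool → Bool → ℝ) × (Bool → Bool → Bool → ℝ) :=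
    fun ω => ((fun b => D1 b ω), (fun b b' => D2 b b' ω), (fun z d1 d2 => Yp z d1 d2 ω)) with hXdef
  have hX : Measurable X := by
    refine Measurable.prodMk ?_ (Measurable.prodMk ?_ ?_)
    · exact measurable_pi_lambda _ hD1meas
    · exact measurable_pi_lambda _ fun b => measurable_pi_lambda _ fun b' => hD2meas b b'
    · exact measurable_pi_lambda _ fun a => measurable_pi_lambda _ fun b =>
        measurable_pi_lambda _ fun c => hYmeas a b c
  have hZ0 : μ (Z ⁻¹' {0}) ≠ 0 := by
    intro h0
    have hc : (Z ⁻¹' {1})ᶜ = Z ⁻¹' {0} := by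
      ext ω
      rcases hZ01 ω with h | h <;> simp [h]
    have := prob_compl_eq_one_sub (μ := μ) (hZmeas (measurableSet_singleton (1 : ℝ)))
    rw [hc, h0] at this
    exact absurd (tsub_eq_zero_iff_le.mp this.symm) (not_le.mpr hZlt)
  have e1 := cond_integral_eq μ X Z hZmeas hindep hX (outG true) (measurable_outG true) 1
    hZpos.ne' (obsY Z D1 D2 Yp) (by
      intro ω hω
      simp only [obsY, obsD2, obsD1, outG, hXdef, hω]
      rcases hD101 true ω with h | h <;> simp [h])
  have e0 := cond_integral_eq μ X Z hZmeas hindep hX (outG false) (measurable_outG false) 0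
    hZ0 (obsY Z D1 D2 Yp) (by
      intro ω hω
      simp only [obsY, obsD2, obsD1, outG, hXdef, hω]
      rcases hD101 false ω with h | h <;> simp [h])
  have hint : ∀ z, Integrable (fun ω => outG z (X ω)) μ := by
    intro z
    refine Integrable.mono' ((((hYint z true true).norm.add (hYint z false true).norm).add
      (hYint z true false).norm).add (hYint z false false).norm)
      ((measurable_outG z).comp hX).aestronglyMeasurable (Filter.Eventually.of_forall fun ω => ?_)
    have p1 := norm_nonneg (Yp z true true ω)
    have p2 := norm_nonneg (Yp z false true ω)
    have p3 := norm_nonneg (Yp z true false ω)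
    have p4 := norm_nonneg (Yp z false false ω)
    simp only [outG, hXdef, Pi.add_apply]
    rcases hD101 z ω with h | h <;> rcases hD201 z true ω with h' | h' <;>
      rcases hD201 z false ω with h'' | h'' <;> simp only [h, h', h''] <;> ring_nf <;> linarith
  have hm1 : MeasurableSet (CCev D1 D2) :=
    (measurableSet_eq_fun ((hD1meas _).sub (hD1meas _)) measurable_const).inter
      (measurableSet_eq_fun ((hD2meas _ _).sub (hD2meas _ _)) measurable_const)
  have hm2 : MeasurableSet (CNev D1 D2) :=
    (measurableSet_eq_fun ((hD1meas _).sub (hD1meas _)) measurable_const).inter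
      ((measurableSet_eq_fun (hD2meas _ _) measurable_const).inter
        (measurableSet_eq_fun (hD2meas _ _) measurable_const))
  have hm3 : MeasurableSet (CAev D1 D2) :=
    (measurableSet_eq_fun ((hD1meas _).sub (hD1meas _)) measurable_const).inter
      ((measurableSet_eq_fun (hD2meas _ _) measurable_const).inter
        (measurableSet_eq_fun (hD2meas _ _) measurable_const))
  have hm4 : MeasurableSet (NCev D1 D2) :=
    (measurableSet_eq_fun (hD1meas _) measurable_const).inter
      ((measurableSet_eq_fun (hD1meas _) measurable_const).inter
        (measurableSet_eq_fun ((hD2meas _ _).sub (hD2meas _ _)) measurable_const))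
  have hm5 : MeasurableSet (ACev D1 D2) :=
    (measurableSet_eq_fun (hD1meas _) measurable_const).inter
      ((measurableSet_eq_fun (hD1meas _) measurable_const).inter
        (measurableSet_eq_fun ((hD2meas _ _).sub (hD2meas _ _)) measurable_const))
  have hd : ∀ a b c d, Integrable (fun ω => Yp true a b ω - Yp true c d ω) μ :=
    fun a b c d => (hYint true a b).sub (hYint true c d)
  have i1 := (hd true true false false).indicator hm1
  have i2 := (hd true false false false).indicator hm2
  have i3 := (hd true true false true).indicator hm3
  have i4 := (hd false true false false).indicator hm4
  have i5 := (hd true true true false).indicator hm5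
  unfold dE
  rw [e1, e0, ← integral_sub (hint true) (hint false), ← integral_indicator hm1,
    ← integral_indicator hm2, ← integral_indicator hm3, ← integral_indicator hm4,
    ← integral_indicator hm5, ← integral_add' i1 i2, ← integral_add' (i1.add i2) i3,
    ← integral_add' ((i1.add i2).add i3) i4, ← integral_add' (((i1.add i2).add i3).add i4) i5]
  refine integral_congr_ae ?_
  filter_upwards [hmono1, hmono2, hexcl true true, hexcl true false, hexcl false true,
    hexcl false false] with ω m1 m2 x1 x2 x3 x4
  simp only [outG, hXdef, Pi.add_apply, Set.indicator, CCev, CNev, CAev, NCev, ACev,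
    Set.mem_ofPred_eq, ← x1, ← x2, ← x3, ← x4]

  rcases hD101 true ω with a | a <;> rcases hD101 false ω with b | b <;>
    simp only [a, b] at m1 m2 ⊢ <;>
    rcases hD201 true true ω with c | c <;> rcases hD201 true false ω with d | d <;>
    rcases hD201 false true ω with e | e <;> rcases hD201 false false ω with f | f <;>
    simp only [c, d, e, f] at m1 m2 ⊢ <;>
    first
    | (exfalso; norm_num at m1; done)
    | (exfalso; norm_num at m2; done)
    | (norm_num; done)
end
end

section
/- (No movers) Under the IV assumptions (Independence, Relevance, Monotonicity, Exclusion), if additionally μ({C1,N2}) = μ({C1,A2}) = μ({N1,C2}) = μ({A1,C2}) = 0, then μ({C1,C2}) > 0 and for each D ∈ {D1, D2, D∧, D∨}, the IV estimand satisfies ΔE[Y|Z]/ΔE[D|Z] = E[Y(1,1)−Y(0,0) | {C1,C2}]. (Corollary 1) -/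
open MeasureTheory ProbabilityTheory

noncomputable section

variable {Ω : Type*} [MeasurableSpace Ω]

lemma integral_cond_of_indep_s5 {β : Type*} [MeasurableSpace β]
    (μ : Measure Ω) [IsProbabilityMeasure μ] (Z : Ω → ℝ) (V : Ω → β)
    (hZ : Measurable Z) (hV : Measurable V) (hind : IndepFun V Z μ)
    (G : ℝ → β → ℝ) (z : ℝ) (hG : Measurable (G z)) (hpos : μ (Z ⁻¹' {z}) ≠ 0) :
    ∫ ω, G (Z ω) (V ω) ∂(μ[|Z ⁻¹' {z}]) = ∫ ω, G z (V ω) ∂μ := by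
  have hms : MeasurableSet (Z ⁻¹' {z}) := hZ (measurableSet_singleton z)
  have hae : ∀ᵐ ω ∂(μ[|Z ⁻¹' {z}]), G (Z ω) (V ω) = G z (V ω) := by
    filter_upwards [ae_cond_mem hms] with ω hω
    have : Z ω = z := hω
    rw [this]
  rw [integral_congr_ae hae]
  have hmap : (μ[|Z ⁻¹' {z}]).map V = μ.map V := by
    ext s hs
    rw [Measure.map_apply hV hs, Measure.map_apply hV hs, cond_apply hms]
    rw [Set.inter_comm, hind.measure_inter_preimage_eq_mul s {z} hs (measurableSet_singleton z),
      mul_comm (μ (V ⁻¹' s)), ← mul_assoc, ENNReal.inv_mul_cancel hpos (measure_ne_top _ _),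
      one_mul]
  rw [← integral_map (f := G z) hV.aemeasurable hG.aestronglyMeasurable,
    ← integral_map (f := G z) hV.aemeasurable hG.aestronglyMeasurable, hmap]

lemma dE_eq_of_indep {β : Type*} [MeasurableSpace β]
    (μ : Measure Ω) [IsProbabilityMeasure μ] (Z : Ω → ℝ) (V : Ω → β)
    (hZ : Measurable Z) (hV : Measurable V) (hind : IndepFun V Z μ)
    (h1 : μ (Z ⁻¹' {1}) ≠ 0) (h0 : μ (Z ⁻¹' {0}) ≠ 0)
    (G : ℝ → β → ℝ) (hG : ∀ z, Measurable (G z))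
    (hi1 : Integrable (fun ω => G 1 (V ω)) μ) (hi0 : Integrable (fun ω => G 0 (V ω)) μ)
    (C : Set Ω) (hC : MeasurableSet C) (F : Ω → ℝ)
    (hF : ∀ᵐ ω ∂μ, G 1 (V ω) - G 0 (V ω) = C.indicator F ω) :
    dE μ Z (fun ω => G (Z ω) (V ω)) = ∫ ω in C, F ω ∂μ := by
  unfold dE
  rw [integral_cond_of_indep_s5 μ Z V hZ hV hind G 1 (hG 1) h1,
    integral_cond_of_indep_s5 μ Z V hZ hV hind G 0 (hG 0) h0, ← integral_sub hi1 hi0,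
    integral_congr_ae hF, integral_indicator hC]

theorem stmt_5
    (μ : Measure Ω) [IsProbabilityMeasure μ]
    (Z : Ω → ℝ) (D1 : Bool → Ω → ℝ) (D2 : Bool → Bool → Ω → ℝ)
    (Yp : Bool → Bool → Bool → Ω → ℝ)
    (hZmeas : Measurable Z)
    (hD1meas : ∀ b, Measurable (D1 b))
    (hD2meas : ∀ b b', Measurable (D2 b b'))
    (hYmeas : ∀ z d1 d2, Measurable (Yp z d1 d2))
    (hYint : ∀ z d1 d2, Integrable (Yp z d1 d2) μ)
    (hZ01 : ∀ ω, Z ω = 0 ∨ Z ω = 1)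
    (hZpos : 0 < μ (Z ⁻¹' {1})) (hZlt : μ (Z ⁻¹' {1}) < 1)
    (hD101 : ∀ b ω, D1 b ω = 0 ∨ D1 b ω = 1)
    (hD201 : ∀ b b' ω, D2 b b' ω = 0 ∨ D2 b b' ω = 1)
    (hindep : IndepFun
      (fun ω => ((fun b => D1 b ω), (fun b b' => D2 b b' ω), (fun z d1 d2 => Yp z d1 d2 ω))) Z μ)
    (hrel1 : 0 < dE μ Z (obsD1 Z D1))
    (hrel2 : 0 < dE μ Z (obsD2 Z D1 D2))
    (hrelAnd : 0 < dE μ Z (obsDand Z D1 D2))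
    (hrelOr : 0 < dE μ Z (obsDor Z D1 D2))
    (hmono1 : ∀ᵐ ω ∂μ, D1 false ω ≤ D1 true ω)
    (hmono2 : ∀ᵐ ω ∂μ,
      D2 false true ω * D1 false ω + D2 false false ω * (1 - D1 false ω) ≤
        D2 true true ω * D1 true ω + D2 true false ω * (1 - D1 true ω))
    (hexcl : ∀ d1 d2, ∀ᵐ ω ∂μ, Yp true d1 d2 ω = Yp false d1 d2 ω)
    (hCN : μ (CNev D1 D2) = 0) (hCA : μ (CAev D1 D2) = 0)
    (hNC : μ (NCev D1 D2) = 0) (hAC : μ (ACev D1 D2) = 0) :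
    0 < μ (CCev D1 D2) ∧
    dE μ Z (obsY Z D1 D2 Yp) / dE μ Z (obsD1 Z D1) =
      (∫ ω in CCev D1 D2, (Yp true true true ω - Yp true false false ω) ∂μ) /
        (μ (CCev D1 D2)).toReal ∧
    dE μ Z (obsY Z D1 D2 Yp) / dE μ Z (obsD2 Z D1 D2) =
      (∫ ω in CCev D1 D2, (Yp true true true ω - Yp true false false ω) ∂μ) /
        (μ (CCev D1 D2)).toReal ∧
    dE μ Z (obsY Z D1 D2 Yp) / dE μ Z (obsDand Z D1 D2) =
      (∫ ω in CCev D1 D2, (Yp true true true ω - Yp true false false ω) ∂μ) /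
        (μ (CCev D1 D2)).toReal ∧
    dE μ Z (obsY Z D1 D2 Yp) / dE μ Z (obsDor Z D1 D2) =
      (∫ ω in CCev D1 D2, (Yp true true true ω - Yp true false false ω) ∂μ) /
        (μ (CCev D1 D2)).toReal := by
  classical
  have h1 : μ (Z ⁻¹' {1}) ≠ 0 := hZpos.ne'
  have h0 : μ (Z ⁻¹' {0}) ≠ 0 := by
    intro h
    have hc : (Z ⁻¹' {1})ᶜ = Z ⁻¹' {0} := by
      ext ω
      rcases hZ01 ω with h | h <;> simp [h]
    rw [← hc, prob_compl_eq_zero_iff (hZmeas (measurableSet_singleton 1))] at h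
    exact hZlt.ne h
  let β := (Bool → ℝ) × (Bool → Bool → ℝ) × (Bool → Bool → Bool → ℝ)
  let V : Ω → β := fun ω =>
    ((fun b => D1 b ω), (fun b b' => D2 b b' ω), (fun z d1 d2 => Yp z d1 d2 ω))
  have hV : Measurable V := by
    refine Measurable.prodMk ?_ (Measurable.prodMk ?_ ?_)
    · exact measurable_pi_lambda _ fun b => hD1meas b
    · exact measurable_pi_lambda _ fun b => measurable_pi_lambda _ fun b' => hD2meas b b'
    · exact measurable_pi_lambda _ fun b => measurable_pi_lambda _ fun b' =>
        measurable_pi_lambda _ fun b'' => hYmeas b b' b''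
  have hC : MeasurableSet (CCev D1 D2) := by
    have e1 : Measurable fun ω => D1 true ω - D1 false ω := (hD1meas _).sub (hD1meas _)
    have e2 : Measurable fun ω => D2 true true ω - D2 false false ω :=
      (hD2meas _ _).sub (hD2meas _ _)
    exact (e1 (measurableSet_singleton 1)).inter (e2 (measurableSet_singleton 1))
  -- the trichotomy
  have hkey : ∀ᵐ ω ∂μ,
      (ω ∈ CCev D1 D2 ∧ D1 true ω = 1 ∧ D1 false ω = 0 ∧ D2 true true ω = 1 ∧
        D2 false false ω = 0) ∨
      (ω ∉ CCev D1 D2 ∧ D1 true ω = 0 ∧ D1 false ω = 0 ∧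
        D2 true false ω = D2 false false ω) ∨
      (ω ∉ CCev D1 D2 ∧ D1 true ω = 1 ∧ D1 false ω = 1 ∧
        D2 true true ω = D2 false true ω) := by
    filter_upwards [hmono1, hmono2, measure_eq_zero_iff_ae_notMem.1 hCN,
      measure_eq_zero_iff_ae_notMem.1 hCA, measure_eq_zero_iff_ae_notMem.1 hNC,
      measure_eq_zero_iff_ae_notMem.1 hAC] with ω m1 m2 a b c d
    simp only [CNev, CAev, NCev, ACev, CCev, Set.mem_ofPred_eq] at a b c d ⊢
    have r1 := hD101 true ω
    have r2 := hD101 false ω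
    have r3 := hD201 true true ω
    have r4 := hD201 true false ω
    have r5 := hD201 false true ω
    have r6 := hD201 false false ω
    clear hD101 hD201 hCN hCA hNC hAC hrel1 hrel2 hrelAnd hrelOr hmono1 hmono2 hexcl hindep hC hV
    clear hYint hYmeas hD1meas hD2meas hZ01 hZpos hZlt h1 h0 hZmeas V β
    generalize D1 true ω = x1 at *
    generalize D1 false ω = x2 at *
    generalize D2 true true ω = x3 at *
    generalize D2 true false ω = x4 at *
    generalize D2 false true ω = x5 at *
    generalize D2 false false ω = x6 at *
    rcases r1 with rfl | rfl <;> rcases r2 with rfl | rfl <;> rcases r3 with rfl | rfl <;>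
      rcases r4 with rfl | rfl <;> rcases r5 with rfl | rfl <;> rcases r6 with rfl | rfl <;>
      first | (norm_num; done) | (exfalso; revert a b c d m1 m2; norm_num; done)
  have hex : ∀ᵐ ω ∂μ, ∀ d1 d2, Yp true d1 d2 ω = Yp false d1 d2 ω := by
    rw [ae_all_iff]; intro d1; rw [ae_all_iff]; intro d2; exact hexcl d1 d2
  let p1 : Bool → β → ℝ := fun b v => v.1 b
  let p2 : Bool → Bool → β → ℝ := fun b b' v => v.2.1 b b'
  let pY : Bool → Bool → Bool → β → ℝ := fun z d1 d2 v => v.2.2 z d1 d2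
  have hp1 : ∀ b, Measurable (p1 b) := fun b => (measurable_pi_apply b).comp measurable_fst
  have hp2 : ∀ b b', Measurable (p2 b b') := fun b b' =>
    (measurable_pi_apply b').comp ((measurable_pi_apply b).comp
      (measurable_fst.comp measurable_snd))
  have hpY : ∀ b b' b'', Measurable (pY b b' b'') := fun b b' b'' =>
    (measurable_pi_apply b'').comp ((measurable_pi_apply b').comp ((measurable_pi_apply b).comp
      (measurable_snd.comp measurable_snd)))
  have mD1 : ∀ z : ℝ, Measurable (obsD1 (fun _ => z) p1) := fun z =>
    ((hp1 _).mul_const _).add ((hp1 _).mul_const _)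
  have mD2 : ∀ z : ℝ, Measurable (obsD2 (fun _ => z) p1 p2) := fun z =>
    ((((hp2 _ _).mul (mD1 z)).add ((hp2 _ _).mul ((mD1 z).const_sub 1))).mul_const _).add
      ((((hp2 _ _).mul (mD1 z)).add ((hp2 _ _).mul ((mD1 z).const_sub 1))).mul_const _)
  have mDa : ∀ z : ℝ, Measurable (obsDand (fun _ => z) p1 p2) := fun z => (mD1 z).mul (mD2 z)
  have mDo : ∀ z : ℝ, Measurable (obsDor (fun _ => z) p1 p2) := fun z =>
    ((mD1 z).add (mD2 z)).sub ((mD1 z).mul (mD2 z))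
  have mY : ∀ z : ℝ, Measurable (obsY (fun _ => z) p1 p2 pY) := by
    intro z
    have n1 := mD1 z
    have n2 := mD2 z
    unfold obsY
    fun_prop
  have z01 : ∀ z : ℝ, z = 0 ∨ z = 1 → ∀ ω,
      (obsD1 (fun _ => z) p1 (V ω) = 0 ∨ obsD1 (fun _ => z) p1 (V ω) = 1) ∧
      (obsD2 (fun _ => z) p1 p2 (V ω) = 0 ∨ obsD2 (fun _ => z) p1 p2 (V ω) = 1) := by
    intro z hz ω
    have k1 : obsD1 (fun _ => z) p1 (V ω) = 0 ∨ obsD1 (fun _ => z) p1 (V ω) = 1 := by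
      rcases hz with rfl | rfl
      · simpa [obsD1, p1, V] using hD101 false ω
      · simpa [obsD1, p1, V] using hD101 true ω
    refine ⟨k1, ?_⟩
    unfold obsD2
    rcases hz with rfl | rfl <;> rcases k1 with k | k <;> rw [k] <;> simp [p2, V, hD201]
  have bdd : ∀ f : β → ℝ, Measurable f → (∀ ω, f (V ω) = 0 ∨ f (V ω) = 1) →
      Integrable (fun ω => f (V ω)) μ := by
    intro f hf h
    refine Integrable.of_bound (hf.comp hV).aestronglyMeasurable 1 (ae_of_all _ fun ω => ?_)
    rcases h ω with h | h <;> simp [h]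
  have iD1 : ∀ z : ℝ, z = 0 ∨ z = 1 → Integrable (fun ω => obsD1 (fun _ => z) p1 (V ω)) μ :=
    fun z hz => bdd _ (mD1 z) fun ω => (z01 z hz ω).1
  have iD2 : ∀ z : ℝ, z = 0 ∨ z = 1 → Integrable (fun ω => obsD2 (fun _ => z) p1 p2 (V ω)) μ :=
    fun z hz => bdd _ (mD2 z) fun ω => (z01 z hz ω).2
  have iDa : ∀ z : ℝ, z = 0 ∨ z = 1 →
      Integrable (fun ω => obsDand (fun _ => z) p1 p2 (V ω)) μ :=
    fun z hz => bdd _ (mDa z) fun ω => by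
      unfold obsDand
      rcases z01 z hz ω with ⟨h | h, h' | h'⟩ <;> simp [h, h']
  have iDo : ∀ z : ℝ, z = 0 ∨ z = 1 →
      Integrable (fun ω => obsDor (fun _ => z) p1 p2 (V ω)) μ :=
    fun z hz => bdd _ (mDo z) fun ω => by
      unfold obsDor
      rcases z01 z hz ω with ⟨h | h, h' | h'⟩ <;> simp [h, h']
  have iY : ∀ z : ℝ, z = 0 ∨ z = 1 →
      Integrable (fun ω => obsY (fun _ => z) p1 p2 pY (V ω)) μ := by
    intro z hz
    have hb : Integrable (fun ω => ∑ a : Bool, ∑ b : Bool, ∑ c : Bool, |Yp a b c ω|) μ :=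
      integrable_finsetSum _ fun a _ => integrable_finsetSum _ fun b _ =>
        integrable_finsetSum _ fun c _ => (hYint a b c).abs
    refine hb.mono' ((mY z).comp hV).aestronglyMeasurable (ae_of_all _ fun ω => ?_)
    have q : ∀ a b c, 0 ≤ |Yp a b c ω| := fun a b c => abs_nonneg _
    have q1 := q true true true
    have q2 := q true true false
    have q3 := q true false true
    have q4 := q true false false
    have q5 := q false true true
    have q6 := q false true false
    have q7 := q false false true
    have q8 := q false false false
    simp only [Fintype.sum_bool, Real.norm_eq_abs]
    unfold obsY
    rcases z01 z hz ω with ⟨h | h, h' | h'⟩ <;> rw [h, h'] <;> rcases hz with rfl | rfl <;>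
      simp only [pY, V, mul_zero, mul_one, sub_zero, sub_self, zero_add, add_zero] <;> linarith
  have eD1 : dE μ Z (obsD1 Z D1) = ∫ ω in CCev D1 D2, (1 : ℝ) ∂μ :=
    dE_eq_of_indep μ Z V hZmeas hV hindep h1 h0 (fun z => obsD1 (fun _ => z) p1) mD1
      (iD1 1 (Or.inr rfl)) (iD1 0 (Or.inl rfl)) _ hC (fun _ => 1) (by
        filter_upwards [hkey] with ω hk
        rcases hk with ⟨k, k1, k2, k3, k4⟩ | ⟨k, k1, k2, k3⟩ | ⟨k, k1, k2, k3⟩ <;>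
          simp [obsD1, p1, V, k, k1, k2])
  have eD2 : dE μ Z (obsD2 Z D1 D2) = ∫ ω in CCev D1 D2, (1 : ℝ) ∂μ :=
    dE_eq_of_indep μ Z V hZmeas hV hindep h1 h0 (fun z => obsD2 (fun _ => z) p1 p2) mD2
      (iD2 1 (Or.inr rfl)) (iD2 0 (Or.inl rfl)) _ hC (fun _ => 1) (by
        filter_upwards [hkey] with ω hk
        rcases hk with ⟨k, k1, k2, k3, k4⟩ | ⟨k, k1, k2, k3⟩ | ⟨k, k1, k2, k3⟩
        · simp [obsD2, obsD1, p1, p2, V, k, k1, k2, k3, k4]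
        · simp [obsD2, obsD1, p1, p2, V, k, k1, k2, k3]
        · simp [obsD2, obsD1, p1, p2, V, k, k1, k2, k3])
  have eDa : dE μ Z (obsDand Z D1 D2) = ∫ ω in CCev D1 D2, (1 : ℝ) ∂μ :=
    dE_eq_of_indep μ Z V hZmeas hV hindep h1 h0 (fun z => obsDand (fun _ => z) p1 p2) mDa
      (iDa 1 (Or.inr rfl)) (iDa 0 (Or.inl rfl)) _ hC (fun _ => 1) (by
        filter_upwards [hkey] with ω hk
        rcases hk with ⟨k, k1, k2, k3, k4⟩ | ⟨k, k1, k2, k3⟩ | ⟨k, k1, k2, k3⟩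
        · simp [obsDand, obsD2, obsD1, p1, p2, V, k, k1, k2, k3]
        · simp [obsDand, obsD2, obsD1, p1, p2, V, k, k1, k2]
        · simp [obsDand, obsD2, obsD1, p1, p2, V, k, k1, k2, k3])
  have eDo : dE μ Z (obsDor Z D1 D2) = ∫ ω in CCev D1 D2, (1 : ℝ) ∂μ :=
    dE_eq_of_indep μ Z V hZmeas hV hindep h1 h0 (fun z => obsDor (fun _ => z) p1 p2) mDo
      (iDo 1 (Or.inr rfl)) (iDo 0 (Or.inl rfl)) _ hC (fun _ => 1) (by
        filter_upwards [hkey] with ω hk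
        rcases hk with ⟨k, k1, k2, k3, k4⟩ | ⟨k, k1, k2, k3⟩ | ⟨k, k1, k2, k3⟩
        · simp [obsDor, obsD2, obsD1, p1, p2, V, k, k1, k2, k3, k4]
        · simp [obsDor, obsD2, obsD1, p1, p2, V, k, k1, k2, k3]
        · simp [obsDor, obsD2, obsD1, p1, p2, V, k, k1, k2, k3])
  have eY : dE μ Z (obsY Z D1 D2 Yp) =
      ∫ ω in CCev D1 D2, (Yp true true true ω - Yp true false false ω) ∂μ :=
    dE_eq_of_indep μ Z V hZmeas hV hindep h1 h0 (fun z => obsY (fun _ => z) p1 p2 pY) mY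
      (iY 1 (Or.inr rfl)) (iY 0 (Or.inl rfl)) _ hC _ (by
        filter_upwards [hkey, hex] with ω hk hx
        rcases hk with ⟨k, k1, k2, k3, k4⟩ | ⟨k, k1, k2, k3⟩ | ⟨k, k1, k2, k3⟩
        · simp [obsY, obsD2, obsD1, p1, p2, pY, V, k, k1, k2, k3, k4, hx]
        · simp [obsY, obsD2, obsD1, p1, p2, pY, V, k, k1, k2, k3, hx]
        · simp [obsY, obsD2, obsD1, p1, p2, pY, V, k, k1, k2, k3, hx])
  have hone : ∫ ω in CCev D1 D2, (1 : ℝ) ∂μ = (μ (CCev D1 D2)).toReal := by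
    simp [Measure.real]
  rw [hone] at eD1 eD2 eDa eDo
  refine ⟨?_, ?_, ?_, ?_, ?_⟩
  · rw [eD1] at hrel1
    exact (ENNReal.toReal_pos_iff.1 hrel1).1
  · rw [eY, eD1]
  · rw [eY, eD2]
  · rw [eY, eDa]
  · rw [eY, eDo]
end
end

section
/- (Upper bound on the LAFTE) Under Independence, Relevance, Monotonicity, the Double exclusion restriction, the positive response condition E[Y(0,0); {C1,A2}] ≥ 0, the monotone treatment response conditions E[Y(1,1)−Y(1,0); {C1,N2}] ≥ 0 and E[Y(0,1)−Y(0,0); {C1,A2}] ≥ 0, and the monotone treatment selection conditions μ({C1,N2})·E[Y(1,1); {C1,A2}] ≥ μ({C1,A2})·E[Y(1,1); {C1,N2}] and μ({C1,N2})·E[Y(1,1); {C1,C2}] ≥ μ({C1,C2})·E[Y(1,1); {C1,N2}], it holds that E[Y(1,1)−Y(0,0) | C] ≤ ΔE[D∧·Y|Z]/ΔE[D∧|Z] + ΔE[(1−D1)(1−D2)·Y|Z]/ΔE[D1|Z], where C := {C1,C2} ∪ {C1,N2} ∪ {C1,A2} satisfies μ(C) = ΔE[D1|Z] > 0. (Theorem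 1, upper bound) -/
open MeasureTheory ProbabilityTheory

noncomputable section

variable {Ω : Type*} [MeasurableSpace Ω]

theorem cond_int_aux {T : Type*} [MeasurableSpace T] (μ : Measure Ω) [IsProbabilityMeasure μ]
    (W : Ω → T) (Z : Ω → ℝ) (hW : Measurable W) (hZ : Measurable Z) (hind : IndepFun W Z μ)
    (z : ℝ) (hz : μ (Z ⁻¹' {z}) ≠ 0) (g : T → ℝ) (hg : Measurable g) (A : Ω → ℝ)
    (hA : ∀ ω, Z ω = z → A ω = g (W ω)) :
    ∫ ω, A ω ∂(μ[|Z ⁻¹' {z}]) = ∫ ω, g (W ω) ∂μ := by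
  have hs : MeasurableSet (Z ⁻¹' {z}) := hZ (measurableSet_singleton z)
  have hi : Measurable (Set.indicator ({z} : Set ℝ) (fun _ => (1 : ℝ))) :=
    measurable_const.indicator (measurableSet_singleton z)
  have h1 := (hind.comp hg hi).integral_fun_mul_eq_mul_integral
    (hg.comp hW).aestronglyMeasurable (hi.comp hZ).aestronglyMeasurable
  have h2 : ∫ ω, A ω ∂(μ.restrict (Z ⁻¹' {z}))
      = (∫ ω, g (W ω) ∂μ) * (μ (Z ⁻¹' {z})).toReal := by
    have e1 : ∫ ω, (Set.indicator ({z} : Set ℝ) (fun _ => (1 : ℝ)) ∘ Z) ω ∂μ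
        = (μ (Z ⁻¹' {z})).toReal := by
      have : (Set.indicator ({z} : Set ℝ) (fun _ => (1 : ℝ)) ∘ Z)
          = (Z ⁻¹' {z}).indicator (fun _ => (1 : ℝ)) := by
        ext ω
        by_cases h : Z ω = z <;> simp [h]
      rw [this, integral_indicator hs]; simp [Measure.real]
    rw [e1] at h1
    rw [← integral_indicator hs]
    refine Eq.trans (integral_congr_ae (Filter.Eventually.of_forall fun ω => ?_)) h1
    by_cases h : Z ω = z
    · simp [Set.indicator, h, hA ω h]
    · simp [Set.indicator, h]
  have hne : (μ (Z ⁻¹' {z})).toReal ≠ 0 := ENNReal.toReal_ne_zero.2 ⟨hz, measure_ne_top _ _⟩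
  rw [ProbabilityTheory.cond, integral_smul_measure, h2, ENNReal.toReal_inv, smul_eq_mul]
  field_simp

theorem dE_aux {T : Type*} [MeasurableSpace T] (μ : Measure Ω) [IsProbabilityMeasure μ]
    (W : Ω → T) (Z : Ω → ℝ) (hW : Measurable W) (hZ : Measurable Z) (hind : IndepFun W Z μ)
    (hz1 : μ (Z ⁻¹' {1}) ≠ 0) (hz0 : μ (Z ⁻¹' {0}) ≠ 0)
    (g1 g0 : T → ℝ) (hg1 : Measurable g1) (hg0 : Measurable g0) (A Y : Ω → ℝ)
    (hY : Integrable Y μ)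
    (hi1 : ∀ᵐ ω ∂μ, g1 (W ω) = 0 ∨ g1 (W ω) = Y ω)
    (hi0 : ∀ᵐ ω ∂μ, g0 (W ω) = 0 ∨ g0 (W ω) = Y ω)
    (hA1 : ∀ ω, Z ω = 1 → A ω = g1 (W ω)) (hA0 : ∀ ω, Z ω = 0 → A ω = g0 (W ω))
    (S : Set Ω) (hS : MeasurableSet S) (h : Ω → ℝ)
    (hSh : ∀ᵐ ω ∂μ, (ω ∈ S ∧ g1 (W ω) - g0 (W ω) = h ω) ∨ (ω ∉ S ∧ g1 (W ω) - g0 (W ω) = 0)) :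
    dE μ Z A = ∫ ω in S, h ω ∂μ := by
  have key : ∀ g : T → ℝ, Measurable g → (∀ᵐ ω ∂μ, g (W ω) = 0 ∨ g (W ω) = Y ω) →
      Integrable (fun ω => g (W ω)) μ := by
    intro g hg hh
    refine hY.mono (hg.comp hW).aestronglyMeasurable ?_
    filter_upwards [hh] with ω hω
    rcases hω with h | h <;> simp [h]
  unfold dE
  rw [cond_int_aux μ W Z hW hZ hind 1 hz1 g1 hg1 A hA1,
    cond_int_aux μ W Z hW hZ hind 0 hz0 g0 hg0 A hA0,
    ← integral_sub (key g1 hg1 hi1) (key g0 hg0 hi0), ← integral_indicator hS]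
  refine integral_congr_ae ?_
  filter_upwards [hSh] with ω hω
  rcases hω with ⟨a, b⟩ | ⟨a, b⟩ <;> simp [a, b]

theorem stmt_12
    (μ : Measure Ω) [IsProbabilityMeasure μ]
    (Z : Ω → ℝ) (D1 : Bool → Ω → ℝ) (D2 : Bool → Bool → Ω → ℝ)
    (Yp : Bool → Bool → Bool → Ω → ℝ)
    (hZmeas : Measurable Z)
    (hD1meas : ∀ b, Measurable (D1 b))
    (hD2meas : ∀ b b', Measurable (D2 b b'))
    (hYmeas : ∀ z d1 d2, Measurable (Yp z d1 d2))
    (hYint : ∀ z d1 d2, Integrable (Yp z d1 d2) μ)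
    (hZ01 : ∀ ω, Z ω = 0 ∨ Z ω = 1)
    (hZpos : 0 < μ (Z ⁻¹' {1})) (hZlt : μ (Z ⁻¹' {1}) < 1)
    (hD101 : ∀ b ω, D1 b ω = 0 ∨ D1 b ω = 1)
    (hD201 : ∀ b b' ω, D2 b b' ω = 0 ∨ D2 b b' ω = 1)
    (hindep : IndepFun
      (fun ω => ((fun b => D1 b ω), (fun b b' => D2 b b' ω), (fun z d1 d2 => Yp z d1 d2 ω))) Z μ)
    (hrel1 : 0 < dE μ Z (obsD1 Z D1))
    (hrel2 : 0 < dE μ Z (obsD2 Z D1 D2))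
    (hrelAnd : 0 < dE μ Z (obsDand Z D1 D2))
    (hrelOr : 0 < dE μ Z (obsDor Z D1 D2))
    (hmono1 : ∀ᵐ ω ∂μ, D1 false ω ≤ D1 true ω)
    (hmono2 : ∀ᵐ ω ∂μ,
      D2 false true ω * D1 false ω + D2 false false ω * (1 - D1 false ω) ≤
        D2 true true ω * D1 true ω + D2 true false ω * (1 - D1 true ω))
    (hexcl : ∀ d1 d2, ∀ᵐ ω ∂μ, Yp true d1 d2 ω = Yp false d1 d2 ω)
    (hdexcl : ∀ d1, ∀ᵐ ω ∂μ, D2 true d1 ω = D2 false d1 ω)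
    (hpos : 0 ≤ ∫ ω in CAev D1 D2, Yp true false false ω ∂μ)
    (hmtr1 : 0 ≤ ∫ ω in CNev D1 D2, (Yp true true true ω - Yp true true false ω) ∂μ)
    (hmtr2 : 0 ≤ ∫ ω in CAev D1 D2, (Yp true false true ω - Yp true false false ω) ∂μ)
    (hmts1 : (μ (CAev D1 D2)).toReal * ∫ ω in CNev D1 D2, Yp true true true ω ∂μ ≤
      (μ (CNev D1 D2)).toReal * ∫ ω in CAev D1 D2, Yp true true true ω ∂μ)
    (hmts2 : (μ (CCev D1 D2)).toReal * ∫ ω in CNev D1 D2, Yp true true true ω ∂μ ≤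
      (μ (CNev D1 D2)).toReal * ∫ ω in CCev D1 D2, Yp true true true ω ∂μ) :
    (μ (CCev D1 D2 ∪ CNev D1 D2 ∪ CAev D1 D2)).toReal = dE μ Z (obsD1 Z D1) ∧
    (∫ ω in CCev D1 D2 ∪ CNev D1 D2 ∪ CAev D1 D2, (Yp true true true ω - Yp true false false ω) ∂μ) /
        (μ (CCev D1 D2 ∪ CNev D1 D2 ∪ CAev D1 D2)).toReal ≤
      dE μ Z (fun ω => obsDand Z D1 D2 ω * obsY Z D1 D2 Yp ω) / dE μ Z (obsDand Z D1 D2) +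
        dE μ Z (fun ω => (1 - obsD1 Z D1 ω) * (1 - obsD2 Z D1 D2 ω) * obsY Z D1 D2 Yp ω) /
          dE μ Z (obsD1 Z D1) := by
  have hZ0 : μ (Z ⁻¹' {0}) ≠ 0 := by
    intro h0
    have hu : Z ⁻¹' {1} = (Z ⁻¹' {0})ᶜ := by
      ext ω
      rcases hZ01 ω with h | h <;> simp [h]
    rw [hu, prob_compl_eq_one_sub (hZmeas (measurableSet_singleton 0)), h0] at hZlt
    simp at hZlt
  have hCC : MeasurableSet (CCev D1 D2) :=
    (measurableSet_eq_fun ((hD1meas true).sub (hD1meas false)) measurable_const).inter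
      (measurableSet_eq_fun ((hD2meas true true).sub (hD2meas false false)) measurable_const)
  have hCN : MeasurableSet (CNev D1 D2) :=
    (measurableSet_eq_fun ((hD1meas true).sub (hD1meas false)) measurable_const).inter
      ((measurableSet_eq_fun (hD2meas true true) measurable_const).inter
        (measurableSet_eq_fun (hD2meas false false) measurable_const))
  have hCA : MeasurableSet (CAev D1 D2) :=
    (measurableSet_eq_fun ((hD1meas true).sub (hD1meas false)) measurable_const).inter
      ((measurableSet_eq_fun (hD2meas true true) measurable_const).inter
        (measurableSet_eq_fun (hD2meas false false) measurable_const))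
  have dCN : Disjoint (CCev D1 D2) (CNev D1 D2) := by
    rw [Set.disjoint_left]
    rintro ω ⟨_, h⟩ ⟨_, h1, h2⟩
    linarith
  have dCA : Disjoint (CCev D1 D2) (CAev D1 D2) := by
    rw [Set.disjoint_left]
    rintro ω ⟨_, h⟩ ⟨_, h1, h2⟩
    linarith
  have dNA : Disjoint (CNev D1 D2) (CAev D1 D2) := by
    rw [Set.disjoint_left]
    rintro ω ⟨_, h, _⟩ ⟨_, h1, h2⟩
    linarith
  have dall : Disjoint (CCev D1 D2 ∪ CNev D1 D2) (CAev D1 D2) :=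
    Set.disjoint_union_left.2 ⟨dCA, dNA⟩
  have hall : ∀ᵐ ω ∂μ, D1 false ω ≤ D1 true ω ∧
      D2 false true ω * D1 false ω + D2 false false ω * (1 - D1 false ω) ≤
        D2 true true ω * D1 true ω + D2 true false ω * (1 - D1 true ω) ∧
      (∀ d1 d2, Yp false d1 d2 ω = Yp true d1 d2 ω) ∧
      D2 true true ω = D2 false true ω ∧ D2 true false ω = D2 false false ω := by
    have hx : ∀ᵐ ω ∂μ, ∀ d1 d2, Yp true d1 d2 ω = Yp false d1 d2 ω := by
      rw [ae_all_iff]; intro d1; rw [ae_all_iff]; exact hexcl d1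
    filter_upwards [hmono1, hmono2, hx, hdexcl true, hdexcl false] with ω h1 h2 h3 h4 h5
    exact ⟨h1, h2, fun a b => (h3 a b).symm, h4, h5⟩
  let W : Ω → (Bool → ℝ) × (Bool → Bool → ℝ) × (Bool → Bool → Bool → ℝ) :=
    fun ω => ((fun b => D1 b ω), (fun b b' => D2 b b' ω), (fun z d1 d2 => Yp z d1 d2 ω))
  have hW : Measurable W := by
    refine Measurable.prodMk ?_ (Measurable.prodMk ?_ ?_)
    · exact measurable_pi_lambda _ hD1meas
    · exact measurable_pi_lambda _ fun b => measurable_pi_lambda _ fun b' => hD2meas b b'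
    · exact measurable_pi_lambda _ fun b => measurable_pi_lambda _ fun b' =>
        measurable_pi_lambda _ fun b'' => hYmeas b b' b''
  have E1 : dE μ Z (obsD1 Z D1) = ∫ ω in CCev D1 D2 ∪ CNev D1 D2 ∪ CAev D1 D2, (fun _ => (1:ℝ)) ω ∂μ := by
    refine dE_aux μ W Z hW hZmeas hindep hZpos.ne' hZ0
      (fun w => w.1 true) (fun w => w.1 false) (by fun_prop) (by fun_prop) _ (fun _ => (1:ℝ)) (integrable_const 1)
      ?_ ?_ ?_ ?_ _ ((hCC.union hCN).union hCA) _ ?_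
    · filter_upwards [hall] with ω hω
      obtain ⟨m1, m2, e, f1, f2⟩ := hω
      rcases hD101 true ω with a | a <;> rcases hD201 true true ω with c | c <;>
        rcases hD201 true false ω with d | d <;> simp [W, a, c, d]
    · filter_upwards [hall] with ω hω
      obtain ⟨m1, m2, e, f1, f2⟩ := hω
      rcases hD101 false ω with a | a <;> rcases hD201 true true ω with c | c <;>
        rcases hD201 true false ω with d | d <;> simp [W, a, ← f1, ← f2, c, d, e]
    · intro ω hz
      rcases hD101 true ω with a | a <;> rcases hD201 true true ω with c | c <;>
        rcases hD201 true false ω with d | d <;>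
        simp [W, hz, a, c, d, obsD1, obsD2, obsDand, obsY]
    · intro ω hz
      rcases hD101 false ω with a | a <;> rcases hD201 false true ω with c | c <;>
        rcases hD201 false false ω with d | d <;>
        simp [W, hz, a, c, d, obsD1, obsD2, obsDand, obsY]
    · filter_upwards [hall] with ω hω
      obtain ⟨m1, m2, e, f1, f2⟩ := hω
      rcases hD101 true ω with a | a <;> rcases hD101 false ω with b | b <;>
        rcases hD201 true true ω with c | c <;>
        rcases hD201 true false ω with d | d <;>
        first
        | (exfalso; simp [a, b, c, d, ← f1, ← f2] at m1 m2; linarith)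
        | (simp [W, a, b, c, d, ← f1, ← f2, e, CCev, CNev, CAev])
  have E2 : dE μ Z (obsDand Z D1 D2) = ∫ ω in CCev D1 D2 ∪ CAev D1 D2, (fun _ => (1:ℝ)) ω ∂μ := by
    refine dE_aux μ W Z hW hZmeas hindep hZpos.ne' hZ0
      (fun w => w.1 true * w.2.1 true true) (fun w => w.1 false * w.2.1 false true) (by fun_prop) (by fun_prop) _ (fun _ => (1:ℝ)) (integrable_const 1)
      ?_ ?_ ?_ ?_ _ (hCC.union hCA) _ ?_
    · filter_upwards [hall] with ω hω
      obtain ⟨m1, m2, e, f1, f2⟩ := hω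
      rcases hD101 true ω with a | a <;> rcases hD201 true true ω with c | c <;>
        rcases hD201 true false ω with d | d <;> simp [W, a, c, d]
    · filter_upwards [hall] with ω hω
      obtain ⟨m1, m2, e, f1, f2⟩ := hω
      rcases hD101 false ω with a | a <;> rcases hD201 true true ω with c | c <;>
        rcases hD201 true false ω with d | d <;> simp [W, a, ← f1, ← f2, c, d, e]
    · intro ω hz
      rcases hD101 true ω with a | a <;> rcases hD201 true true ω with c | c <;>
        rcases hD201 true false ω with d | d <;>
        simp [W, hz, a, c, d, obsD1, obsD2, obsDand, obsY]
    · intro ω hz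
      rcases hD101 false ω with a | a <;> rcases hD201 false true ω with c | c <;>
        rcases hD201 false false ω with d | d <;>
        simp [W, hz, a, c, d, obsD1, obsD2, obsDand, obsY]
    · filter_upwards [hall] with ω hω
      obtain ⟨m1, m2, e, f1, f2⟩ := hω
      rcases hD101 true ω with a | a <;> rcases hD101 false ω with b | b <;>
        rcases hD201 true true ω with c | c <;>
        rcases hD201 true false ω with d | d <;>
        first
        | (exfalso; simp [a, b, c, d, ← f1, ← f2] at m1 m2; linarith)
        | (simp [W, a, b, c, d, ← f1, ← f2, e, CCev, CNev, CAev])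
  have E3 : dE μ Z (fun ω => obsDand Z D1 D2 ω * obsY Z D1 D2 Yp ω) = ∫ ω in CCev D1 D2 ∪ CAev D1 D2, (fun ω => Yp true true true ω) ω ∂μ := by
    refine dE_aux μ W Z hW hZmeas hindep hZpos.ne' hZ0
      (fun w => w.1 true * w.2.1 true true * w.2.2 true true true) (fun w => w.1 false * w.2.1 false true * w.2.2 false true true) (by fun_prop) (by fun_prop) _ (fun ω => Yp true true true ω) (hYint _ _ _)
      ?_ ?_ ?_ ?_ _ (hCC.union hCA) _ ?_
    · filter_upwards [hall] with ω hω
      obtain ⟨m1, m2, e, f1, f2⟩ := hω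
      rcases hD101 true ω with a | a <;> rcases hD201 true true ω with c | c <;>
        rcases hD201 true false ω with d | d <;> simp [W, a, c, d]
    · filter_upwards [hall] with ω hω
      obtain ⟨m1, m2, e, f1, f2⟩ := hω
      rcases hD101 false ω with a | a <;> rcases hD201 true true ω with c | c <;>
        rcases hD201 true false ω with d | d <;> simp [W, a, ← f1, ← f2, c, d, e]
    · intro ω hz
      rcases hD101 true ω with a | a <;> rcases hD201 true true ω with c | c <;>
        rcases hD201 true false ω with d | d <;>
        simp [W, hz, a, c, d, obsD1, obsD2, obsDand, obsY]
    · intro ω hz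
      rcases hD101 false ω with a | a <;> rcases hD201 false true ω with c | c <;>
        rcases hD201 false false ω with d | d <;>
        simp [W, hz, a, c, d, obsD1, obsD2, obsDand, obsY]
    · filter_upwards [hall] with ω hω
      obtain ⟨m1, m2, e, f1, f2⟩ := hω
      rcases hD101 true ω with a | a <;> rcases hD101 false ω with b | b <;>
        rcases hD201 true true ω with c | c <;>
        rcases hD201 true false ω with d | d <;>
        first
        | (exfalso; simp [a, b, c, d, ← f1, ← f2] at m1 m2; linarith)
        | (simp [W, a, b, c, d, ← f1, ← f2, e, CCev, CNev, CAev])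
  have E4 : dE μ Z (fun ω => (1 - obsD1 Z D1 ω) * (1 - obsD2 Z D1 D2 ω) * obsY Z D1 D2 Yp ω) = ∫ ω in CCev D1 D2 ∪ CNev D1 D2, (fun ω => - Yp true false false ω) ω ∂μ := by
    refine dE_aux μ W Z hW hZmeas hindep hZpos.ne' hZ0
      (fun w => (1 - w.1 true) * (1 - w.2.1 true false) * w.2.2 true false false) (fun w => (1 - w.1 false) * (1 - w.2.1 false false) * w.2.2 false false false) (by fun_prop) (by fun_prop) _ (fun ω => Yp true false false ω) (hYint _ _ _)
      ?_ ?_ ?_ ?_ _ (hCC.union hCN) _ ?_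
    · filter_upwards [hall] with ω hω
      obtain ⟨m1, m2, e, f1, f2⟩ := hω
      rcases hD101 true ω with a | a <;> rcases hD201 true true ω with c | c <;>
        rcases hD201 true false ω with d | d <;> simp [W, a, c, d]
    · filter_upwards [hall] with ω hω
      obtain ⟨m1, m2, e, f1, f2⟩ := hω
      rcases hD101 false ω with a | a <;> rcases hD201 true true ω with c | c <;>
        rcases hD201 true false ω with d | d <;> simp [W, a, ← f1, ← f2, c, d, e]
    · intro ω hz
      rcases hD101 true ω with a | a <;> rcases hD201 true true ω with c | c <;>
        rcases hD201 true false ω with d | d <;>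
        simp [W, hz, a, c, d, obsD1, obsD2, obsDand, obsY]
    · intro ω hz
      rcases hD101 false ω with a | a <;> rcases hD201 false true ω with c | c <;>
        rcases hD201 false false ω with d | d <;>
        simp [W, hz, a, c, d, obsD1, obsD2, obsDand, obsY]
    · filter_upwards [hall] with ω hω
      obtain ⟨m1, m2, e, f1, f2⟩ := hω
      rcases hD101 true ω with a | a <;> rcases hD101 false ω with b | b <;>
        rcases hD201 true true ω with c | c <;>
        rcases hD201 true false ω with d | d <;>
        first
        | (exfalso; simp [a, b, c, d, ← f1, ← f2] at m1 m2; linarith)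
        | (simp [W, a, b, c, d, ← f1, ← f2, e, CCev, CNev, CAev])
  have hp : (μ (CCev D1 D2 ∪ CNev D1 D2 ∪ CAev D1 D2)).toReal = dE μ Z (obsD1 Z D1) := by
    rw [E1]; simp [Measure.real]
  refine ⟨hp, ?_⟩
  have hq : dE μ Z (obsDand Z D1 D2) = (μ (CCev D1 D2)).toReal + (μ (CAev D1 D2)).toReal := by
    rw [E2, setIntegral_const, smul_eq_mul, mul_one, measureReal_union dCA hCA]; rfl
  have hp' : dE μ Z (obsD1 Z D1) = (μ (CCev D1 D2)).toReal + (μ (CNev D1 D2)).toReal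
      + (μ (CAev D1 D2)).toReal := by
    rw [E1, setIntegral_const, smul_eq_mul, mul_one, measureReal_union dall hCA,
      measureReal_union dCN hCN]; rfl
  have i11 := hYint true true true
  have i00 := hYint true false false
  rw [hp, E3, E4, integral_sub i11.integrableOn i00.integrableOn,
    setIntegral_union dall hCA i11.integrableOn i11.integrableOn,
    setIntegral_union dCN hCN i11.integrableOn i11.integrableOn,
    setIntegral_union dall hCA i00.integrableOn i00.integrableOn,
    setIntegral_union dCA hCA i11.integrableOn i11.integrableOn,
    integral_neg]
  rw [hp'] at hrel1 ⊢
  rw [hq] at hrelAnd ⊢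
  rw [setIntegral_union dCN hCN i00.integrableOn i00.integrableOn]
  generalize (μ (CCev D1 D2)).toReal = c at *
  generalize (μ (CNev D1 D2)).toReal = n at *
  generalize (μ (CAev D1 D2)).toReal = a at *
  generalize ∫ ω in CCev D1 D2, Yp true true true ω ∂μ = yc at *
  generalize ∫ ω in CNev D1 D2, Yp true true true ω ∂μ = yn at *
  generalize ∫ ω in CAev D1 D2, Yp true true true ω ∂μ = ya at *
  generalize ∫ ω in CCev D1 D2, Yp true false false ω ∂μ = xc at *
  generalize ∫ ω in CNev D1 D2, Yp true false false ω ∂μ = xn at *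
  generalize ∫ ω in CAev D1 D2, Yp true false false ω ∂μ = xa at *
  have k1 : (yc + yn + ya) / (c + n + a) ≤ (yc + ya) / (c + a) := by
    rw [div_le_div_iff₀ hrel1 hrelAnd]
    nlinarith
  have k2 : 0 ≤ xa / (c + n + a) := div_nonneg hpos hrel1.le
  have k3 : (yc + yn + ya - (xc + xn + xa)) / (c + n + a)
      = (yc + yn + ya) / (c + n + a) + -(xc + xn) / (c + n + a) - xa / (c + n + a) := by ring
  rw [k3]
  linarith
end
end
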